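/- arXiv:2504.10138 — 7 statements merged into one kernel-verified Lean document; each statement's English description precedes it below -/
import Mathlib

section
/- For every integer k ≥ 2, if α > 1 is the unique real root greater than 1 of the polynomial Ψ_k(x) = x^k − x^{k−1} − ⋯ − x − 1, then 1/2 < f_k(α) < 3/4, where f_k(x) = (x − 1)/(2 + (k + 1)(x − 2)). -/
/-!
Multiplying `Ψ_k(α) = 0` by `α - 1` gives `α ^ k * (2 - α) = 1`, so `(3 * k - 1) / 2 < α ^ k` is
the same as `(3 * k - 1) * (2 - α) < 2`. As `0 < (k - 1) * (2 - α)`, this makes the denominator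
`2 - (k + 1) * (2 - α)` of `f_k(α)` positive, and clearing it turns these two inequalities into
`f_k(α) < 3 / 4` and `1 / 2 < f_k(α)`, respectively.

Bounding the `k - 1` nonconstant terms of `α ^ k = 1 + α + ⋯ + α ^ (k - 1)` below by `α` gives
`1 + (k - 1) * α ≤ α ^ k`. With `1 < α` this yields `2 < α ^ k`, hence `3 / 2 < α`; with
`3 / 2 < α` it then yields `(3 * k - 1) / 2 < α ^ k`.
-/

theorem pow_mul_two_sub_eq_one_of_pow_eq_geom_sum {R : Type*} [Ring R] {x : R} {k : ℕ}
    (hroot : x ^ k = ∑ i ∈ Finset.range k, x ^ i) : x ^ k * (2 - x) = 1 := by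
  have hgeom : x ^ k * (x - 1) = x ^ k - 1 := by
    simpa only [← hroot] using geom_sum_mul x k
  calc x ^ k * (2 - x) = x ^ k - x ^ k * (x - 1) := by noncomm_ring
    _ = 1 := by rw [hgeom, sub_sub_cancel]

theorem one_add_sub_one_mul_le_geom_sum {R : Type*} [Ring R] [PartialOrder R] [IsOrderedRing R]
    {x : R} (hx : 1 ≤ x) (k : ℕ) : 1 + ((k : R) - 1) * x ≤ ∑ i ∈ Finset.range k, x ^ i := by
  cases k with
  | zero => simpa using hx
  | succ n =>
    have hterms : n • x ≤ ∑ i ∈ Finset.range n, x ^ (i + 1) := by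
      simpa only [Finset.card_range] using
        Finset.card_nsmul_le_sum (Finset.range n) (fun i ↦ x ^ (i + 1)) x
          fun i _ ↦ le_self_pow₀ hx i.succ_ne_zero
    rw [Finset.sum_range_succ', pow_zero, add_comm 1, Nat.cast_succ, add_sub_cancel_right,
      ← nsmul_eq_mul]
    gcongr

section LinearOrderedField

variable {K : Type*} [Field K] [LinearOrder K] [IsStrictOrderedRing K] {x : K} {k : ℕ}

theorem lt_two_of_pow_eq_geom_sum (hx : 0 < x)
    (hroot : x ^ k = ∑ i ∈ Finset.range k, x ^ i) : x < 2 := by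
  have hmul : 0 < x ^ k * (2 - x) := by
    rw [pow_mul_two_sub_eq_one_of_pow_eq_geom_sum hroot]
    exact one_pos
  exact sub_pos.1 (pos_of_mul_pos_right hmul (pow_pos hx k).le)

theorem three_halves_lt_of_pow_eq_geom_sum (hk : 2 ≤ k) (hx : 1 < x)
    (hroot : x ^ k = ∑ i ∈ Finset.range k, x ^ i) : 3 / 2 < x := by
  have hk' : (2 : K) ≤ k := by exact_mod_cast hk
  have hpow : 2 < x ^ k :=
    calc (2 : K) < 1 + 1 * x := by linarith
      _ ≤ 1 + ((k : K) - 1) * x := by gcongr; linarith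
      _ ≤ x ^ k := hroot ▸ one_add_sub_one_mul_le_geom_sum hx.le k
  have hpos : 0 < 2 - x := sub_pos.2 (lt_two_of_pow_eq_geom_sum (one_pos.trans hx) hroot)
  have hmul : 2 * (2 - x) < 1 :=
    calc 2 * (2 - x) < x ^ k * (2 - x) := by gcongr
      _ = 1 := pow_mul_two_sub_eq_one_of_pow_eq_geom_sum hroot
  linarith

theorem three_mul_sub_one_mul_two_sub_lt_two_of_pow_eq_geom_sum (hk : 2 ≤ k) (hx : 1 < x)
    (hroot : x ^ k = ∑ i ∈ Finset.range k, x ^ i) : (3 * (k : K) - 1) * (2 - x) < 2 := by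
  have hk' : 0 < (k : K) - 1 := sub_pos.2 (by exact_mod_cast hk)
  have hpow : 3 * (k : K) - 1 < 2 * x ^ k :=
    calc 3 * (k : K) - 1 = 2 * (1 + ((k : K) - 1) * (3 / 2)) := by ring
      _ < 2 * (1 + ((k : K) - 1) * x) := by
        gcongr
        exact three_halves_lt_of_pow_eq_geom_sum hk hx hroot
      _ ≤ 2 * x ^ k := by
        gcongr
        exact hroot ▸ one_add_sub_one_mul_le_geom_sum hx.le k
  have hpos : 0 < 2 - x := sub_pos.2 (lt_two_of_pow_eq_geom_sum (one_pos.trans hx) hroot)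
  calc (3 * (k : K) - 1) * (2 - x) < 2 * x ^ k * (2 - x) := by gcongr
    _ = 2 := by rw [mul_assoc, pow_mul_two_sub_eq_one_of_pow_eq_geom_sum hroot, mul_one]

end LinearOrderedField

/-- For k ≥ 2, if α > 1 is the unique real root greater than 1 of
Ψ_k(x) = x^k − x^{k−1} − ⋯ − x − 1, then 1/2 < f_k(α) < 3/4, where
f_k(x) = (x − 1)/(2 + (k + 1)(x − 2)). -/
theorem fk_alpha_bounds
    (k : ℕ) (hk : 2 ≤ k) (α : ℝ) (hα : 1 < α)
    (hroot : α ^ k = ∑ i ∈ Finset.range k, α ^ i)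
    (huniq : ∀ β : ℝ, 1 < β → β ^ k = ∑ i ∈ Finset.range k, β ^ i → β = α) :
    1 / 2 < (α - 1) / (2 + ((k : ℝ) + 1) * (α - 2)) ∧
      (α - 1) / (2 + ((k : ℝ) + 1) * (α - 2)) < 3 / 4 := by
  have hpos : 0 < 2 - α := sub_pos.2 (lt_two_of_pow_eq_geom_sum (one_pos.trans hα) hroot)
  have hupper : (3 * (k : ℝ) - 1) * (2 - α) < 2 :=
    three_mul_sub_one_mul_two_sub_lt_two_of_pow_eq_geom_sum hk hα hroot
  have hlower : 0 < ((k : ℝ) - 1) * (2 - α) :=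
    mul_pos (sub_pos.2 (by exact_mod_cast hk)) hpos
  have hden : 0 < 2 + ((k : ℝ) + 1) * (α - 2) := by linarith
  constructor
  · rw [div_lt_div_iff₀ two_pos hden]
    linarith
  · rw [div_lt_div_iff₀ hden four_pos]
    linarith
end

section
/- For every integer k ≥ 2, every complex root z of Ψ_k(x) = x^k − x^{k−1} − ⋯ − x − 1 other than the real root α > 1 satisfies |z| < 1 and |f_k(z)| < 1, where f_k(x) = (x − 1)/(2 + (k + 1)(x − 2)). -/
/-!
Multiplying `z ^ k = ∑ i < k, z ^ i` by `z - 1` gives `z ^ k * (2 - z) = 1`. If `1 ≤ ‖z‖`, the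
triangle inequality applied to the sum gives likewise `1 ≤ ‖z‖ ^ k * (2 - ‖z‖)`; dividing,
`‖2 - z‖ ≤ 2 - ‖z‖`, which forces `z` to be a nonnegative real. As `∑ i < k, x ^ i / x ^ k` is
strictly decreasing on the positive reals, `α` is the only such root.

For the second bound, put `w = z - 1`: the denominator of `f_k` is `(k + 1) * w - (k - 1)`, and
subtracting `k - 1 ≥ 0` from a number of nonpositive real part does not decrease its modulus.
-/

open Finset

theorem geom_sum_mul_pow_lt_geom_sum_mul_pow {R : Type*} [CommSemiring R] [PartialOrder R]
    [IsStrictOrderedRing R] {n : ℕ} (hn : n ≠ 0) {a b : R} (ha : 0 < a) (hab : a < b) :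
    (∑ i ∈ range n, b ^ i) * a ^ n < (∑ i ∈ range n, a ^ i) * b ^ n := by
  have hb : 0 < b := ha.trans hab
  rw [sum_mul, sum_mul]
  refine sum_lt_sum_of_nonempty (nonempty_range_iff.2 hn) fun i hi => ?_
  have hin : i < n := mem_range.1 hi
  calc b ^ i * a ^ n = a ^ i * b ^ i * a ^ (n - i) := by
        rw [← Nat.add_sub_of_le hin.le, pow_add, Nat.add_sub_cancel_left]; ring
    _ < a ^ i * b ^ i * b ^ (n - i) := by
        gcongr
        exact Nat.sub_ne_zero_of_lt hin
    _ = a ^ i * b ^ n := by rw [mul_assoc, ← pow_add, Nat.add_sub_of_le hin.le]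

theorem eq_of_pow_eq_geom_sum {R : Type*} [CommSemiring R] [LinearOrder R]
    [IsStrictOrderedRing R] {n : ℕ} {a b : R} (ha : 0 < a) (hb : 0 < b)
    (ha_root : a ^ n = ∑ i ∈ range n, a ^ i) (hb_root : b ^ n = ∑ i ∈ range n, b ^ i) :
    a = b := by
  have hn : n ≠ 0 := by
    rintro rfl
    simp at ha_root
  have cross_eq : (∑ i ∈ range n, a ^ i) * b ^ n = (∑ i ∈ range n, b ^ i) * a ^ n := by
    rw [← ha_root, ← hb_root, mul_comm]
  exact le_antisymm
    (not_lt.1 fun hba => (geom_sum_mul_pow_lt_geom_sum_mul_pow hn hb hba).ne cross_eq)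
    (not_lt.1 fun hab => (geom_sum_mul_pow_lt_geom_sum_mul_pow hn ha hab).ne cross_eq.symm)

theorem pow_mul_two_sub {R : Type*} [Ring R] (x : R) (n : ℕ) :
    x ^ n * (2 - x) = 1 + (∑ i ∈ range n, x ^ i - x ^ n) * (x - 1) := by
  rw [sub_mul, geom_sum_mul]
  noncomm_ring

theorem norm_two_sub_le_of_pow_eq_geom_sum {K : Type*} [NormedDivisionRing K] {n : ℕ} {z : K}
    (hz : z ^ n = ∑ i ∈ range n, z ^ i) (hz_norm : 1 ≤ ‖z‖) : ‖2 - z‖ ≤ 2 - ‖z‖ := by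
  have triangle : ‖z‖ ^ n ≤ ∑ i ∈ range n, ‖z‖ ^ i := by
    simpa only [← hz, norm_pow] using norm_sum_le (range n) (z ^ ·)
  have root_eq : z ^ n * (2 - z) = 1 := by rw [pow_mul_two_sub, ← hz, sub_self, zero_mul, add_zero]
  refine le_of_mul_le_mul_left ?_ (show 0 < ‖z‖ ^ n by positivity)
  calc ‖z‖ ^ n * ‖2 - z‖ = 1 := by rw [← norm_pow, ← norm_mul, root_eq, norm_one]
    _ ≤ 1 + (∑ i ∈ range n, ‖z‖ ^ i - ‖z‖ ^ n) * (‖z‖ - 1) :=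
        le_add_of_nonneg_right (mul_nonneg (sub_nonneg.2 triangle) (sub_nonneg.2 hz_norm))
    _ = ‖z‖ ^ n * (2 - ‖z‖) := (pow_mul_two_sub _ _).symm

theorem eq_norm_of_norm_ofReal_sub_le {K : Type*} [RCLike K] {r : ℝ} {z : K}
    (h : ‖(r : K) - z‖ ≤ r - ‖z‖) : z = ‖z‖ := by
  have hre : r - RCLike.re z ≤ ‖(r : K) - z‖ := by
    simpa only [map_sub, RCLike.ofReal_re] using RCLike.re_le_norm ((r : K) - z)
  exact RCLike.norm_le_re_iff_eq_norm.1 (by linarith)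

theorem norm_lt_one_of_pow_eq_geom_sum {K : Type*} [RCLike K] {n : ℕ} {a : ℝ} (ha : 0 < a)
    (ha_root : a ^ n = ∑ i ∈ range n, a ^ i) {z : K} (hz : z ^ n = ∑ i ∈ range n, z ^ i)
    (hza : z ≠ a) : ‖z‖ < 1 := by
  by_contra! hz_norm
  have hz_real : z = ‖z‖ := eq_norm_of_norm_ofReal_sub_le (r := 2) <| by
    simpa only [RCLike.ofReal_ofNat] using norm_two_sub_le_of_pow_eq_geom_sum hz hz_norm
  have norm_root : ‖z‖ ^ n = ∑ i ∈ range n, ‖z‖ ^ i := by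
    rw [hz_real] at hz
    exact_mod_cast hz
  have norm_eq : ‖z‖ = a := eq_of_pow_eq_geom_sum (by linarith) ha norm_root ha_root
  exact hza (by rw [hz_real, norm_eq])

theorem norm_le_norm_sub_of_inner_nonpos {E : Type*} [NormedAddCommGroup E]
    [InnerProductSpace ℝ E] {x y : E} (h : inner ℝ x y ≤ 0) : ‖x‖ ≤ ‖x - y‖ := by
  refine le_of_sq_le_sq ?_ (norm_nonneg _)
  rw [norm_sub_sq_real]
  linarith [sq_nonneg ‖y‖]

theorem mul_norm_sub_one_le {t : ℝ} (ht : 1 ≤ t) {z : ℂ} (hz : z.re ≤ 1) :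
    (t + 1) * ‖z - 1‖ ≤ ‖2 + ((t : ℂ) + 1) * (z - 2)‖ := by
  have ht_pos : 0 ≤ t + 1 := by linarith
  have inner_eq : inner ℝ (((t + 1 : ℝ) : ℂ) * (z - 1)) ((t - 1 : ℝ) : ℂ)
      = (t - 1) * (t + 1) * (z.re - 1) := by
    simp [Complex.inner, mul_assoc]
  have inner_nonpos : inner ℝ (((t + 1 : ℝ) : ℂ) * (z - 1)) ((t - 1 : ℝ) : ℂ) ≤ 0 :=
    inner_eq.trans_le <|
      mul_nonpos_of_nonneg_of_nonpos (mul_nonneg (sub_nonneg.2 ht) ht_pos) (sub_nonpos.2 hz)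
  calc (t + 1) * ‖z - 1‖ = ‖((t + 1 : ℝ) : ℂ) * (z - 1)‖ := by
        rw [norm_mul, Complex.norm_of_nonneg ht_pos]
    _ ≤ ‖((t + 1 : ℝ) : ℂ) * (z - 1) - ((t - 1 : ℝ) : ℂ)‖ :=
        norm_le_norm_sub_of_inner_nonpos inner_nonpos
    _ = ‖2 + ((t : ℂ) + 1) * (z - 2)‖ := by
        congr 1
        push_cast
        ring

/-- For k ≥ 2, every complex root z of Ψ_k(x) = x^k − x^{k−1} − ⋯ − x − 1 other
than the real root α > 1 satisfies |z| < 1 and |f_k(z)| < 1, where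
f_k(x) = (x − 1)/(2 + (k + 1)(x − 2)). -/
theorem psi_roots_inside_unit_disc
    (k : ℕ) (hk : 2 ≤ k) (α : ℝ) (hα : 1 < α)
    (hroot : α ^ k = ∑ i ∈ Finset.range k, α ^ i)
    (z : ℂ) (hz : z ^ k = ∑ i ∈ Finset.range k, z ^ i) (hzα : z ≠ (α : ℂ)) :
    ‖z‖ < 1 ∧
      ‖(z - 1) / (2 + ((k : ℂ) + 1) * (z - 2))‖ < 1 := by
  have hz_norm : ‖z‖ < 1 := norm_lt_one_of_pow_eq_geom_sum (zero_lt_one.trans hα) hroot hz hzα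
  have hk_one : (1 : ℝ) ≤ k := by exact_mod_cast one_le_two.trans hk
  have hz_re : z.re ≤ 1 := (Complex.re_le_norm z).trans hz_norm.le
  have hden : ((k : ℝ) + 1) * ‖z - 1‖ ≤ ‖2 + ((k : ℂ) + 1) * (z - 2)‖ :=
    mod_cast mul_norm_sub_one_le hk_one hz_re
  refine ⟨hz_norm, ?_⟩
  calc ‖(z - 1) / (2 + ((k : ℂ) + 1) * (z - 2))‖ ≤ ((k : ℝ) + 1)⁻¹ := by
        rw [norm_div]
        refine div_le_of_le_mul₀ (norm_nonneg _) (by positivity) ?_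
        exact (le_inv_mul_iff₀ (by positivity)).2 hden
    _ < 1 := inv_lt_one_of_one_lt₀ (by linarith)
end

section
/- Suppose the integers k ≥ 2, n ≥ 9, ℓ ≥ 1, m ≥ 1 and digits d1, d2 ∈ {0,…,9} with d1 > 0, d1 ≠ d2 satisfy F_n^(k) = d1·((10^ℓ−1)/9)·10^{ℓ+m} + d2·((10^m−1)/9)·10^ℓ + d1·((10^ℓ−1)/9). Then 2ℓ + m < n < 5(2ℓ + m) + 2. -/
/-! The sequence at most doubles at each step, so `F n ≤ 2 ^ (n - 1)`. When `2 ≤ k`, its terms also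
satisfy `F a ≥ F (a - 1) + F (a - 2)`, and since `F (a - 1) ≥ F a / 2`, five steps multiply the
sequence by at least `5 * (3 / 2) + 3 = 10.5`, so `F (5 * L + 2) ≥ 10 ^ L`. These two growth rates
compare the index `n` with the number `L` of decimal digits of `F n`; the palindrome has
`L = 2 * ℓ + m` of them. -/

open Finset

/-- `F` is a `k`-generalized Fibonacci sequence. Its values at indices below `2 - k` are not
constrained, since the initial values and the recurrence never refer to them. -/
structure IsGeneralizedFibonacci (k : ℕ) (F : ℤ → ℤ) : Prop where
  apply_eq_zero : ∀ n : ℤ, 2 - (k : ℤ) ≤ n → n ≤ 0 → F n = 0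
  apply_one : F 1 = 1
  apply_eq_sum : ∀ n : ℤ, 2 ≤ n → F n = ∑ i ∈ range k, F (n - 1 - (i : ℤ))

namespace IsGeneralizedFibonacci

variable {k : ℕ} {F : ℤ → ℤ} {a n : ℤ}

theorem nonneg (hF : IsGeneralizedFibonacci k F) {a : ℤ} (ha : 2 - (k : ℤ) ≤ a) : 0 ≤ F a := by
  obtain h | rfl | h : a ≤ 0 ∨ a = 1 ∨ 2 ≤ a := by omega
  · exact (hF.apply_eq_zero a ha h).ge
  · simp [hF.apply_one]
  · rw [hF.apply_eq_sum a h]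
    refine sum_nonneg fun i hi ↦ ?_
    have hik : i < k := mem_range.mp hi
    exact hF.nonneg (by omega)
termination_by (a - (2 - (k : ℤ))).toNat

theorem add_sub_eq_two_mul (hF : IsGeneralizedFibonacci k F) (ha : 2 ≤ a) :
    F (a + 1) + F (a - k) = 2 * F a :=
  calc F (a + 1) + F (a - k)
    _ = ∑ i ∈ range (k + 1), F (a - i) := by
      rw [sum_range_succ, hF.apply_eq_sum (a + 1) (by omega), add_sub_cancel_right]
    _ = F a + ∑ i ∈ range k, F (a - 1 - i) := by
      rw [sum_range_succ', add_comm]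
      simp [sub_sub, add_comm]
    _ = 2 * F a := by rw [← hF.apply_eq_sum a ha, two_mul]

theorem apply_two_le_one (hF : IsGeneralizedFibonacci k F) : F 2 ≤ 1 := by
  rw [hF.apply_eq_sum 2 le_rfl]
  cases k with
  | zero => simp
  | succ k =>
    have htail : ∑ i ∈ range k, F (2 - 1 - ((i + 1 : ℕ) : ℤ)) = 0 :=
      sum_eq_zero fun i hi ↦ by
        have hik : i < k := mem_range.mp hi
        exact hF.apply_eq_zero _ (by omega) (by omega)
    rw [sum_range_succ', htail]
    simp [hF.apply_one]

theorem succ_le_two_mul (hF : IsGeneralizedFibonacci k F) (ha : 1 ≤ a) :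
    F (a + 1) ≤ 2 * F a := by
  obtain rfl | h := ha.eq_or_lt
  · have := hF.apply_two_le_one
    rw [hF.apply_one]
    norm_num
    linarith
  · have hnonneg : 0 ≤ F (a - k) := hF.nonneg (by omega)
    linarith [hF.add_sub_eq_two_mul h]

theorem le_two_pow (hF : IsGeneralizedFibonacci k F) (j : ℕ) : F (j + 1) ≤ 2 ^ j := by
  induction j with
  | zero => simp [hF.apply_one]
  | succ j ih =>
    have hstep := hF.succ_le_two_mul (a := j + 1) (by omega)
    rw [pow_succ]
    push_cast
    linarith

theorem add_one_lt_of_pow_le (hF : IsGeneralizedFibonacci k F) {b : ℤ} (hb : 2 < b) (hn : 1 ≤ n)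
    {L : ℕ} (hL : L ≠ 0) (h : b ^ L ≤ F n) : (L : ℤ) + 1 < n := by
  by_contra! hnL
  obtain ⟨j, rfl⟩ : ∃ j : ℕ, n = j + 1 := ⟨(n - 1).toNat, by omega⟩
  refine h.not_gt ?_
  calc F (j + 1) ≤ 2 ^ j := hF.le_two_pow j
    _ ≤ 2 ^ L := pow_le_pow_right₀ one_le_two (by omega)
    _ < b ^ L := pow_lt_pow_left₀ hb zero_le_two hL

theorem add_succ_le (hF : IsGeneralizedFibonacci k F) (hk : 2 ≤ k) (ha : 0 ≤ a) :
    F a + F (a + 1) ≤ F (a + 2) := by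
  have hsub : range 2 ⊆ range k := range_mono hk
  calc F a + F (a + 1) = ∑ i ∈ range 2, F (a + 2 - 1 - i) := by
        rw [sum_range_succ, sum_range_one, add_comm]
        ring_nf
    _ ≤ ∑ i ∈ range k, F (a + 2 - 1 - i) :=
        sum_le_sum_of_subset_of_nonneg hsub fun i hi _ ↦ by
          have hik : i < k := mem_range.mp hi
          exact hF.nonneg (by omega)
    _ = F (a + 2) := (hF.apply_eq_sum _ (by omega)).symm

theorem monotoneOn (hF : IsGeneralizedFibonacci k F) (hk : 2 ≤ k) :
    MonotoneOn F (Set.Ici 1) := by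
  refine monotoneOn_of_le_add_one Set.ordConnected_Ici fun a _ ha _ ↦ ?_
  have ha : 1 ≤ a := ha
  have hnonneg : 0 ≤ F (a - 1) := hF.nonneg (by omega)
  grind [hF.add_succ_le hk (a := a - 1) (by omega)]

theorem ten_mul_le (hF : IsGeneralizedFibonacci k F) (hk : 2 ≤ k) (ha : 2 ≤ a) :
    10 * F a ≤ F (a + 5) := by
  have hnonneg : 0 ≤ F a := hF.nonneg (by omega)
  have hdouble : F a ≤ 2 * F (a - 1) := by
    simpa using hF.succ_le_two_mul (a := a - 1) (by omega)
  have hfib (i : ℕ) : F (a - 1 + i) + F (a - 1 + i + 1) ≤ F (a - 1 + i + 2) :=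
    hF.add_succ_le hk (by omega)
  have h5 : 5 * F (a + 1) + 3 * F a ≤ F (a + 5) := by
    grind [hfib 1, hfib 2, hfib 3, hfib 4]
  have h1 : F (a - 1) + F a ≤ F (a + 1) := by grind [hfib 0]
  linarith

theorem ten_pow_le (hF : IsGeneralizedFibonacci k F) (hk : 2 ≤ k) (L : ℕ) :
    10 ^ L ≤ F (5 * L + 2) := by
  induction L with
  | zero =>
    have hF0 : F 0 = 0 := hF.apply_eq_zero 0 (by omega) le_rfl
    simpa [hF0, hF.apply_one] using hF.add_succ_le hk le_rfl
  | succ L ih =>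
    calc (10 : ℤ) ^ (L + 1) ≤ 10 * F (5 * L + 2) := by rw [pow_succ']; gcongr
      _ ≤ F (5 * L + 2 + 5) := hF.ten_mul_le hk (by omega)
      _ = F (5 * (L + 1 : ℕ) + 2) := by congr 1

theorem lt_of_lt_ten_pow (hF : IsGeneralizedFibonacci k F) (hk : 2 ≤ k) {L : ℕ}
    (h : F n < 10 ^ L) : n < 5 * L + 2 := by
  by_contra! hn
  have hmono : F (5 * L + 2) ≤ F n :=
    hF.monotoneOn hk (Set.mem_Ici.mpr (by omega)) (Set.mem_Ici.mpr (by omega)) hn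
  exact h.not_ge ((hF.ten_pow_le hk L).trans hmono)

end IsGeneralizedFibonacci

theorem digit_length_bounds_general {k : ℕ} (hk : 2 ≤ k) {F : ℤ → ℤ}
    (hF : IsGeneralizedFibonacci k F) {n : ℤ} (hn : 1 ≤ n) {L : ℕ} (hL : 2 ≤ L)
    (h : F n ∈ Set.Ico (10 ^ (L - 1)) (10 ^ L)) : (L : ℤ) < n ∧ n < 5 * L + 2 := by
  have hlower := hF.add_one_lt_of_pow_le (by norm_num) hn (by omega) h.1
  exact ⟨by omega, hF.lt_of_lt_ten_pow hk h.2⟩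

/-- The number written in base `b` as the digit `d` repeated `j` times. -/
def repdigit (b d : ℤ) (j : ℕ) : ℤ := d * ∑ i ∈ range j, b ^ i

section Digits

variable {b d x y : ℤ} {i j : ℕ}

theorem repdigit_eq_mul_ediv (hb : b ≠ 1) : repdigit b d j = d * ((b ^ j - 1) / (b - 1)) := by
  rw [repdigit, Int.ediv_eq_of_eq_mul_left (sub_ne_zero.mpr hb) (geom_sum_mul b j).symm]

theorem repdigit_nonneg (hb : 0 ≤ b) (hd : 0 ≤ d) : 0 ≤ repdigit b d j :=
  mul_nonneg hd (sum_nonneg fun _ _ ↦ pow_nonneg hb _)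

theorem repdigit_lt_pow (hb : 0 ≤ b) (hd : d < b) : repdigit b d j < b ^ j :=
  calc repdigit b d j ≤ (b - 1) * ∑ i ∈ range j, b ^ i :=
        mul_le_mul_of_nonneg_right (by omega) (sum_nonneg fun _ _ ↦ pow_nonneg hb _)
    _ = b ^ j - 1 := mul_geom_sum b j
    _ < b ^ j := sub_one_lt _

theorem pow_le_repdigit (hb : 0 ≤ b) (hd : 1 ≤ d) (hj : j ≠ 0) :
    b ^ (j - 1) ≤ repdigit b d j :=
  calc b ^ (j - 1) ≤ ∑ i ∈ range j, b ^ i :=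
        single_le_sum (fun _ _ ↦ pow_nonneg hb _) (mem_range.mpr (by omega))
    _ ≤ d * ∑ i ∈ range j, b ^ i :=
        le_mul_of_one_le_left (sum_nonneg fun _ _ ↦ pow_nonneg hb _) hd

theorem mul_pow_add_lt_pow (hb : 0 ≤ b) (hx : x < b ^ i) (hy : y < b ^ j) :
    x * b ^ j + y < b ^ (i + j) :=
  calc x * b ^ j + y < (x + 1) * b ^ j := by linarith
    _ ≤ b ^ i * b ^ j := mul_le_mul_of_nonneg_right hx (pow_nonneg hb j)
    _ = b ^ (i + j) := (pow_add b i j).symm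

theorem pow_le_mul_pow_add (hb : 0 ≤ b) (hx : b ^ i ≤ x) (hy : 0 ≤ y) :
    b ^ (i + j) ≤ x * b ^ j + y :=
  calc b ^ (i + j) = b ^ i * b ^ j := pow_add b i j
    _ ≤ x * b ^ j := mul_le_mul_of_nonneg_right hx (pow_nonneg hb j)
    _ ≤ x * b ^ j + y := le_add_of_nonneg_right hy

theorem repdigit_palindrome_mem_Ico {d₁ d₂ : ℤ} {ℓ m : ℕ} (hd₁ : d₁ ∈ Set.Ico 1 b)
    (hd₂ : d₂ ∈ Set.Ico 0 b) (hℓ : ℓ ≠ 0) :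
    repdigit b d₁ ℓ * b ^ (ℓ + m) + repdigit b d₂ m * b ^ ℓ + repdigit b d₁ ℓ
      ∈ Set.Ico (b ^ (2 * ℓ + m - 1)) (b ^ (2 * ℓ + m)) := by
  have hb : 0 ≤ b := hd₂.1.trans hd₂.2.le
  have hnest : repdigit b d₁ ℓ * b ^ (ℓ + m) + repdigit b d₂ m * b ^ ℓ + repdigit b d₁ ℓ
      = (repdigit b d₁ ℓ * b ^ m + repdigit b d₂ m) * b ^ ℓ + repdigit b d₁ ℓ := by ring
  have hlower : 2 * ℓ + m - 1 = ℓ - 1 + m + ℓ := by omega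
  have hupper : 2 * ℓ + m = ℓ + m + ℓ := by omega
  rw [hnest, hlower, hupper]
  constructor
  · exact pow_le_mul_pow_add hb
      (pow_le_mul_pow_add hb (pow_le_repdigit hb hd₁.1 hℓ) (repdigit_nonneg hb hd₂.1))
      (repdigit_nonneg hb (zero_le_one.trans hd₁.1))
  · exact mul_pow_add_lt_pow hb
      (mul_pow_add_lt_pow hb (repdigit_lt_pow hb hd₁.2) (repdigit_lt_pow hb hd₂.2))
      (repdigit_lt_pow hb hd₁.2)

theorem ten_palindrome_mem_Ico {d₁ d₂ ℓ m : ℕ} (hd₁ : d₁ ≤ 9) (hd₂ : d₂ ≤ 9) (hd₁pos : 0 < d₁)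
    (hℓ : 1 ≤ ℓ) :
    (d₁ : ℤ) * ((10 ^ ℓ - 1) / 9) * 10 ^ (ℓ + m) + (d₂ : ℤ) * ((10 ^ m - 1) / 9) * 10 ^ ℓ
        + (d₁ : ℤ) * ((10 ^ ℓ - 1) / 9)
      ∈ Set.Ico ((10 : ℤ) ^ (2 * ℓ + m - 1)) (10 ^ (2 * ℓ + m)) := by
  have hrep (d : ℤ) (j : ℕ) : d * ((10 ^ j - 1) / 9) = repdigit 10 d j :=
    (repdigit_eq_mul_ediv (by norm_num)).symm
  simp only [hrep]
  exact repdigit_palindrome_mem_Ico ⟨by omega, by omega⟩ ⟨by omega, by omega⟩ (by omega)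

end Digits

/-- If F_n^(k) (k ≥ 2, n ≥ 9) is a palindromic concatenation of two distinct
repdigits with parameters ℓ, m ≥ 1, then 2ℓ + m < n < 5(2ℓ + m) + 2. -/
theorem digit_length_bounds
    (k : ℕ) (hk : 2 ≤ k) (F : ℤ → ℤ)
    (hF0 : ∀ n : ℤ, 2 - (k : ℤ) ≤ n → n ≤ 0 → F n = 0)
    (hF1 : F 1 = 1)
    (hFrec : ∀ n : ℤ, 2 ≤ n → F n = ∑ i ∈ Finset.range k, F (n - 1 - (i : ℤ)))
    (n : ℤ) (hn : 9 ≤ n)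
    (d1 d2 : ℕ) (hd1 : d1 ≤ 9) (hd2 : d2 ≤ 9) (hd1pos : 0 < d1) (hne : d1 ≠ d2)
    (ℓ m : ℕ) (hℓ : 1 ≤ ℓ) (hm : 1 ≤ m)
    (heq : F n = (d1 : ℤ) * ((10 ^ ℓ - 1) / 9) * 10 ^ (ℓ + m)
        + (d2 : ℤ) * ((10 ^ m - 1) / 9) * 10 ^ ℓ
        + (d1 : ℤ) * ((10 ^ ℓ - 1) / 9)) :
    (2 * (ℓ : ℤ) + m) < n ∧ n < 5 * (2 * (ℓ : ℤ) + m) + 2 := by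
  exact_mod_cast digit_length_bounds_general hk ⟨hF0, hF1, hFrec⟩ (by omega)
    (by omega : 2 ≤ 2 * ℓ + m) (heq ▸ ten_palindrome_mem_Ico hd1 hd2 hd1pos hℓ)
end

section
/- Let n ≥ 6 be an integer and suppose 2^{n−2} = d1·((10^ℓ−1)/9)·10^{ℓ+m} + d2·((10^m−1)/9)·10^ℓ + d1·((10^ℓ−1)/9) for digits d1, d2 ∈ {0,…,9} with d1 > 0, d1 ≠ d2 and integers ℓ, m ≥ 1. Then ℓ ≤ 3. -/
/-!
Write the number as `x * 10 ^ ℓ + d1 * (1 + 10 + ⋯ + 10 ^ (ℓ - 1))`, where `x` collects the leading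
`ℓ + m` digits. The repunit is coprime to `10`. If `ℓ ≥ 4`, then `16` divides both `10 ^ ℓ` and the
power of two, hence also the nonzero digit `d1`, which is impossible.
-/

lemma coprime_pow_geom_sum (b ℓ : ℕ) : (b ^ ℓ).Coprime (∑ i ∈ Finset.range ℓ, b ^ i) := by
  cases ℓ with
  | zero => simp
  | succ ℓ =>
    refine Nat.Coprime.pow_left _ ?_
    rw [geom_sum_succ, Nat.coprime_mul_left_add_right]
    exact Nat.coprime_one_right b

lemma dvd_mul_pow_add_mul_geom_sum_iff {a b ℓ : ℕ} (ha : a ∣ b ^ ℓ) (x d : ℕ) :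
    a ∣ x * b ^ ℓ + d * ∑ i ∈ Finset.range ℓ, b ^ i ↔ a ∣ d := by
  have hcoprime : a.Coprime (∑ i ∈ Finset.range ℓ, b ^ i) :=
    (coprime_pow_geom_sum b ℓ).coprime_dvd_left ha
  rw [Nat.dvd_add_right (ha.mul_left x), hcoprime.dvd_mul_right]

theorem pow_two_palindrome_ell_le_three_general {p b k ℓ d x : ℕ} (hp : p ∣ b) (hd : ¬ p ^ k ∣ d)
    (h : p ^ k ∣ x * b ^ ℓ + d * ∑ i ∈ Finset.range ℓ, b ^ i) : ℓ < k := by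
  by_contra! hk
  have hpow : p ^ k ∣ b ^ ℓ := pow_dvd_pow_of_dvd_of_le hp hk
  exact hd ((dvd_mul_pow_add_mul_geom_sum_iff hpow x d).1 h)

/-- If n ≥ 6 and 2^{n−2} is a palindromic concatenation of two distinct
repdigits with parameters ℓ, m ≥ 1, then ℓ ≤ 3. -/
theorem pow_two_palindrome_ell_le_three
    (n : ℕ) (hn : 6 ≤ n)
    (d1 d2 : ℕ) (hd1 : d1 ≤ 9) (hd2 : d2 ≤ 9) (hd1pos : 0 < d1) (hne : d1 ≠ d2)
    (ℓ m : ℕ) (hℓ : 1 ≤ ℓ) (hm : 1 ≤ m)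
    (heq : 2 ^ (n - 2) = d1 * ((10 ^ ℓ - 1) / 9) * 10 ^ (ℓ + m)
        + d2 * ((10 ^ m - 1) / 9) * 10 ^ ℓ
        + d1 * ((10 ^ ℓ - 1) / 9)) :
    ℓ ≤ 3 := by
  have hdvd : 2 ^ 4 ∣ (d1 * ((10 ^ ℓ - 1) / 9) * 10 ^ m + d2 * ((10 ^ m - 1) / 9)) * 10 ^ ℓ
      + d1 * ∑ i ∈ Finset.range ℓ, 10 ^ i := by
    rw [Nat.geomSum_eq (by norm_num)]
    calc 2 ^ 4 ∣ 2 ^ (n - 2) := pow_dvd_pow 2 (by omega)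
      _ = _ := by rw [heq]; ring
  have hd1_not_dvd : ¬ 2 ^ 4 ∣ d1 := Nat.not_dvd_of_pos_of_lt hd1pos (by omega)
  exact Nat.le_of_lt_succ
    (pow_two_palindrome_ell_le_three_general (by norm_num) hd1_not_dvd hdvd)
end

section
/- No power of 2 is a palindromic concatenation of two distinct repdigits; that is, there are no integers t ≥ 0, ℓ, m ≥ 1 and digits d1, d2 ∈ {0,…,9} with d1 > 0, d1 ≠ d2 such that 2^t = d1·((10^ℓ−1)/9)·10^{ℓ+m} + d2·((10^m−1)/9)·10^ℓ + d1·((10^ℓ−1)/9). -/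
/-!
Write `N` for the concatenation and `δ = d₁ - d₂`. A power of two with `2ℓ + m` digits is at least
`10 ^ (2ℓ + m - 1)`, hence divisible by `8 ^ (2ℓ + m - 1)`, so it is enough to see that `N` is not.
Now `9 N ≡ δ * 10 ^ ℓ - d₁` modulo `10 ^ (ℓ + m)`. If `2 ^ (ℓ + m)` divides `N`, then it divides
`δ * 10 ^ ℓ - d₁`; in particular `2 ^ ℓ ∣ d₁`, which forces `ℓ ≤ 3`. As `δ * 10 ^ ℓ - d₁` is
nonzero of absolute value at most `9 * 10 ^ ℓ`, also `2 ^ m ≤ 9 * 5 ^ ℓ`, and `m ≤ 10`. Finitely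
many cases are left.
-/

/-- The `n`-digit decimal repunit `11…1`. The division is exact: see `nine_mul_repunit_add_one`. -/
def repunit (n : ℕ) : ℕ := (10 ^ n - 1) / 9

/-- The palindromic concatenation of repdigits whose decimal expansion is a block of `ℓ` digits
`d₁`, a block of `m` digits `d₂`, and again a block of `ℓ` digits `d₁`. The digits may be equal, in
which case this is a repdigit. -/
def palindromicConcat (d₁ d₂ ℓ m : ℕ) : ℕ :=
  d₁ * repunit ℓ * 10 ^ (ℓ + m) + d₂ * repunit m * 10 ^ ℓ + d₁ * repunit ℓ

theorem nine_mul_repunit_add_one (n : ℕ) : 9 * repunit n + 1 = 10 ^ n := by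
  have h : 9 ∣ 10 ^ n - 1 := Nat.sub_one_dvd_pow_sub_one 10 n
  rw [repunit, Nat.mul_div_cancel' h, Nat.sub_add_cancel (Nat.one_le_pow _ _ (by norm_num))]

theorem ten_pow_le_repunit_succ (n : ℕ) : 10 ^ n ≤ repunit (n + 1) := by
  have h := nine_mul_repunit_add_one (n + 1)
  have hpos : 0 < 10 ^ n := by positivity
  rw [pow_succ] at h
  omega

theorem eight_pow_dvd_two_pow_of_ten_pow_le {k t : ℕ} (h : 10 ^ k ≤ 2 ^ t) : 8 ^ k ∣ 2 ^ t := by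
  have h8 : 8 ^ k = 2 ^ (3 * k) := by rw [pow_mul]; norm_num
  have hle : 2 ^ (3 * k) ≤ 2 ^ t := h8 ▸ (Nat.pow_le_pow_left (by norm_num) k).trans h
  exact h8 ▸ pow_dvd_pow 2 ((Nat.pow_le_pow_iff_right (by norm_num)).1 hle)

namespace palindromicConcat

variable {d₁ d₂ ℓ m : ℕ}

theorem ten_pow_le (hd₁ : 0 < d₁) (hℓ : 1 ≤ ℓ) :
    10 ^ (2 * ℓ + m - 1) ≤ palindromicConcat d₁ d₂ ℓ m := by
  obtain ⟨k, rfl⟩ := Nat.exists_eq_add_of_le' hℓ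
  calc 10 ^ (2 * (k + 1) + m - 1)
      = 10 ^ k * 10 ^ (k + 1 + m) := by rw [← pow_add]; congr 1; omega
    _ ≤ d₁ * repunit (k + 1) * 10 ^ (k + 1 + m) := by
        gcongr
        exact (ten_pow_le_repunit_succ k).trans (Nat.le_mul_of_pos_left _ hd₁)
    _ ≤ palindromicConcat d₁ d₂ (k + 1) m := by
        exact (Nat.le_add_right _ _).trans (Nat.le_add_right _ _)

theorem nine_mul (d₁ d₂ ℓ m : ℕ) :
    9 * (palindromicConcat d₁ d₂ ℓ m : ℤ) =
      10 ^ (ℓ + m) * (d₁ * 10 ^ ℓ - (d₁ - d₂)) + ((d₁ - d₂) * 10 ^ ℓ - d₁) := by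
  have hℓ : (9 * repunit ℓ + 1 : ℤ) = 10 ^ ℓ := mod_cast nine_mul_repunit_add_one ℓ
  have hm : (9 * repunit m + 1 : ℤ) = 10 ^ m := mod_cast nine_mul_repunit_add_one m
  simp only [palindromicConcat, Nat.cast_add, Nat.cast_mul, Nat.cast_pow, Nat.cast_ofNat, pow_add]
  linear_combination (d₁ * (10 ^ ℓ * 10 ^ m + 1) : ℤ) * hℓ + (d₂ * 10 ^ ℓ : ℤ) * hm

theorem two_pow_dvd_sub (h : 2 ^ (ℓ + m) ∣ palindromicConcat d₁ d₂ ℓ m) :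
    (2 ^ (ℓ + m) : ℤ) ∣ (d₁ - d₂) * 10 ^ ℓ - d₁ := by
  have hN : (2 ^ (ℓ + m) : ℤ) ∣ palindromicConcat d₁ d₂ ℓ m := mod_cast h
  have h10 : (2 ^ (ℓ + m) : ℤ) ∣ 10 ^ (ℓ + m) := pow_dvd_pow_of_dvd (by norm_num) _
  have h9N := hN.mul_left 9
  rw [nine_mul] at h9N
  exact (dvd_add_right (h10.mul_right _)).1 h9N

theorem two_pow_dvd_outer_digit (h : 2 ^ (ℓ + m) ∣ palindromicConcat d₁ d₂ ℓ m) :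
    2 ^ ℓ ∣ d₁ := by
  have hsub : (2 ^ ℓ : ℤ) ∣ (d₁ - d₂) * 10 ^ ℓ - d₁ :=
    (pow_dvd_pow 2 (Nat.le_add_right ℓ m)).trans (two_pow_dvd_sub h)
  have h10 : (2 ^ ℓ : ℤ) ∣ 10 ^ ℓ := pow_dvd_pow_of_dvd (by norm_num) ℓ
  exact mod_cast (dvd_sub_right (h10.mul_left _)).1 hsub

theorem outer_length_le_three (hd₁ : 0 < d₁) (hd₁' : d₁ ≤ 9)
    (h : 2 ^ (ℓ + m) ∣ palindromicConcat d₁ d₂ ℓ m) : ℓ ≤ 3 := by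
  have hlt : 2 ^ ℓ < 2 ^ 4 :=
    (Nat.le_of_dvd hd₁ (two_pow_dvd_outer_digit h)).trans_lt (by omega)
  exact Nat.le_of_lt_succ ((Nat.pow_lt_pow_iff_right (by norm_num)).1 hlt)

theorem two_pow_inner_length_le (hd₁ : 0 < d₁) (hd₁' : d₁ ≤ 9) (hd₂ : d₂ ≤ 9) (hℓ : 1 ≤ ℓ)
    (h : 2 ^ (ℓ + m) ∣ palindromicConcat d₁ d₂ ℓ m) : 2 ^ m ≤ 9 * 5 ^ ℓ := by
  have h10 : (10 : ℤ) ≤ 10 ^ ℓ := le_self_pow₀ (by norm_num) (by omega)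
  have hne : ((d₁ - d₂) * 10 ^ ℓ - d₁ : ℤ) ≠ 0 := by
    intro h0
    have hdvd : (10 ^ ℓ : ℤ) ∣ d₁ := ⟨d₁ - d₂, by linear_combination -h0⟩
    have := Int.le_of_dvd (mod_cast hd₁) hdvd
    omega
  have habs : |((d₁ - d₂) * 10 ^ ℓ - d₁ : ℤ)| ≤ 9 * 10 ^ ℓ := by
    rw [abs_le]
    constructor <;> nlinarith
  have hle : (2 ^ (ℓ + m) : ℤ) ≤ 9 * 10 ^ ℓ :=
    (Int.le_of_dvd (abs_pos.2 hne) ((dvd_abs _ _).2 (two_pow_dvd_sub h))).trans habs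
  have hmul : 2 ^ ℓ * 2 ^ m ≤ 2 ^ ℓ * (9 * 5 ^ ℓ) := by
    calc 2 ^ ℓ * 2 ^ m = 2 ^ (ℓ + m) := (pow_add 2 ℓ m).symm
      _ ≤ 9 * 10 ^ ℓ := mod_cast hle
      _ = 2 ^ ℓ * (9 * 5 ^ ℓ) := by rw [mul_left_comm, ← mul_pow]; norm_num
  exact Nat.le_of_mul_le_mul_left hmul (by positivity)

theorem inner_length_le_ten (hd₁ : 0 < d₁) (hd₁' : d₁ ≤ 9) (hd₂ : d₂ ≤ 9) (hℓ : 1 ≤ ℓ)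
    (h : 2 ^ (ℓ + m) ∣ palindromicConcat d₁ d₂ ℓ m) : m ≤ 10 := by
  have hlt : 2 ^ m < 2 ^ 11 :=
    calc 2 ^ m ≤ 9 * 5 ^ ℓ := two_pow_inner_length_le hd₁ hd₁' hd₂ hℓ h
      _ ≤ 9 * 5 ^ 3 := by gcongr; exacts [by norm_num, outer_length_le_three hd₁ hd₁' h]
      _ < 2 ^ 11 := by norm_num
  exact Nat.le_of_lt_succ ((Nat.pow_lt_pow_iff_right (by norm_num)).1 hlt)

theorem not_eight_pow_dvd_of_short :
    ∀ ℓ ∈ Finset.Icc 1 3, ∀ m ∈ Finset.Icc 1 10, ∀ d₁ ∈ Finset.Icc 1 9, ∀ d₂ ∈ Finset.Icc 0 9,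
      ¬ 8 ^ (2 * ℓ + m - 1) ∣ palindromicConcat d₁ d₂ ℓ m := by
  decide +kernel

theorem not_eight_pow_dvd (hd₁ : 0 < d₁) (hd₁' : d₁ ≤ 9) (hd₂ : d₂ ≤ 9) (hℓ : 1 ≤ ℓ)
    (hm : 1 ≤ m) : ¬ 8 ^ (2 * ℓ + m - 1) ∣ palindromicConcat d₁ d₂ ℓ m := by
  intro h8
  have h2 : 2 ^ (ℓ + m) ∣ palindromicConcat d₁ d₂ ℓ m :=
    calc 2 ^ (ℓ + m) ∣ 2 ^ (2 * ℓ + m - 1) := pow_dvd_pow 2 (by omega)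
      _ ∣ 8 ^ (2 * ℓ + m - 1) := pow_dvd_pow_of_dvd (by norm_num) _
      _ ∣ palindromicConcat d₁ d₂ ℓ m := h8
  have hℓ' : ℓ ≤ 3 := outer_length_le_three hd₁ hd₁' h2
  have hm' : m ≤ 10 := inner_length_le_ten hd₁ hd₁' hd₂ hℓ h2
  exact not_eight_pow_dvd_of_short ℓ (Finset.mem_Icc.2 ⟨hℓ, hℓ'⟩) m (Finset.mem_Icc.2 ⟨hm, hm'⟩)
    d₁ (Finset.mem_Icc.2 ⟨hd₁, hd₁'⟩) d₂ (Finset.mem_Icc.2 ⟨d₂.zero_le, hd₂⟩) h8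

end palindromicConcat

theorem pow_two_not_palindromic_concat_general
    (t : ℕ) {d₁ d₂ ℓ m : ℕ} (hℓ : 1 ≤ ℓ) (hm : 1 ≤ m)
    (hd₁ : d₁ ≤ 9) (hd₂ : d₂ ≤ 9) (hd₁pos : 0 < d₁) :
    2 ^ t ≠ palindromicConcat d₁ d₂ ℓ m := by
  intro h
  have hdvd : 8 ^ (2 * ℓ + m - 1) ∣ 2 ^ t :=
    eight_pow_dvd_two_pow_of_ten_pow_le (h ▸ palindromicConcat.ten_pow_le hd₁pos hℓ)
  exact palindromicConcat.not_eight_pow_dvd hd₁pos hd₁ hd₂ hℓ hm (h ▸ hdvd)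

/-- No power of 2 is a palindromic concatenation of two distinct repdigits. -/
theorem pow_two_not_palindromic_concat
    (t ℓ m d1 d2 : ℕ) (hℓ : 1 ≤ ℓ) (hm : 1 ≤ m)
    (hd1 : d1 ≤ 9) (hd2 : d2 ≤ 9) (hd1pos : 0 < d1) (hne : d1 ≠ d2) :
    2 ^ t ≠ d1 * ((10 ^ ℓ - 1) / 9) * 10 ^ (ℓ + m)
        + d2 * ((10 ^ m - 1) / 9) * 10 ^ ℓ
        + d1 * ((10 ^ ℓ - 1) / 9) :=
  pow_two_not_palindromic_concat_general t hℓ hm hd1 hd2 hd1pos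
end

section
/- For all integers k ≥ 2, n ≥ 2, ℓ ≥ 1, m ≥ 1 and every digit d1 ∈ {1,…,9}, one has d1·10^{2ℓ+m} ≠ 9·f_k(α)·α^{n−1}, where α is the unique real root greater than 1 of Ψ_k(x) = x^k − x^{k−1} − ⋯ − x − 1 and f_k(x) = (x − 1)/(2 + (k + 1)(x − 2)). -/
/-!
In fact `f_k(α) α ^ n` is irrational for every `n`. The number `α` is an algebraic integer strictly
between `1` and `2`, hence irrational, so some embedding of `ℚ(α)` into `ℂ` sends `α` to another
root `β` of `Ψ_k`, and `|β| ≤ 1`. If `f_k(α) α ^ n` were a rational `q`, the embedding would fix it,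
giving `q = f_k(β) β ^ n`. But `|f_k(z)| ≤ 1 / (k + 1)` on the half-plane `Re z ≤ 1`, which contains
`β`, whereas `f_k(α) > 1 / (k + 1)` and `α ^ n ≥ 1`.
-/

open Finset IntermediateField Polynomial

/-- `x` is a root of `Ψ_k(X) = X ^ k - X ^ (k - 1) - ⋯ - X - 1`, the characteristic polynomial of
the `k`-generalized Fibonacci sequence. Stating this as an equation avoids subtraction. -/
def IsKbonacciRoot {R : Type*} [Semiring R] (k : ℕ) (x : R) : Prop :=
  x ^ k = ∑ i ∈ range k, x ^ i

/-- The function `f_k`, whose value at a root `x` of `Ψ_k` is the coefficient of `x ^ (n - 1)` in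
the Binet-type formula for the `k`-generalized Fibonacci numbers. It takes the junk value `0` at the
zero of the denominator. -/
def binetCoeff {K : Type*} [Field K] (k : ℕ) (x : K) : K :=
  (x - 1) / (2 + ((k : K) + 1) * (x - 2))

theorem map_binetCoeff {K L F : Type*} [Field K] [Field L] [FunLike F K L] [RingHomClass F K L]
    (φ : F) (k : ℕ) (x : K) : φ (binetCoeff k x) = binetCoeff k (φ x) := by
  simp [binetCoeff, map_ofNat]

namespace IsKbonacciRoot

theorem map {R S F : Type*} [Semiring R] [Semiring S] [FunLike F R S] [RingHomClass F R S]
    {k : ℕ} {x : R} (hx : IsKbonacciRoot k x) (φ : F) : IsKbonacciRoot k (φ x) := by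
  simpa [IsKbonacciRoot] using congrArg φ hx

theorem of_map {R S F : Type*} [Semiring R] [Semiring S] [FunLike F R S] [RingHomClass F R S]
    {k : ℕ} {x : R} {φ : F} (hφ : Function.Injective φ) (hx : IsKbonacciRoot k (φ x)) :
    IsKbonacciRoot k x :=
  hφ (by simpa [IsKbonacciRoot] using hx)

theorem ne_zero {R : Type*} [Semiring R] [Nontrivial R] {k : ℕ} {x : R}
    (hx : IsKbonacciRoot k x) : k ≠ 0 := by
  rintro rfl
  simp [IsKbonacciRoot] at hx

theorem pow_mul_two_sub {R : Type*} [CommRing R] {k : ℕ} {x : R} (hx : IsKbonacciRoot k x) :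
    x ^ k * (2 - x) = 1 := by
  have hgeom := geom_sum_mul x k
  rw [← hx] at hgeom
  linear_combination -hgeom

theorem isIntegral {R : Type*} [CommRing R] {k : ℕ} {x : R} (hx : IsKbonacciRoot k x) :
    IsIntegral ℤ x := by
  refine ⟨X ^ k - ∑ i ∈ range k, X ^ i, monic_X_pow_sub ?_, ?_⟩
  · rw [← mem_degreeLT]
    refine Submodule.sum_mem _ fun i hi ↦ mem_degreeLT.2 ?_
    rw [degree_X_pow]
    exact_mod_cast mem_range.1 hi
  · simpa [eval₂_finsetSum, sub_eq_zero, IsKbonacciRoot] using hx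

section LinearOrder

variable {R : Type*} [CommRing R] [LinearOrder R] [IsStrictOrderedRing R] {k : ℕ} {x y : R}

theorem lt_two (hx : IsKbonacciRoot k x) (hpos : 0 < x) : x < 2 := by
  have h : 0 < x ^ k * (2 - x) := hx.pow_mul_two_sub ▸ one_pos
  exact sub_pos.1 (pos_of_mul_pos_right h (by positivity))

theorem two_le (hx : IsKbonacciRoot k x) (hone : 1 < x) : 2 ≤ k := by
  by_contra! hk
  interval_cases k <;> simp [IsKbonacciRoot, hone.ne'] at hx

theorem natCast_le_pow (hx : IsKbonacciRoot k x) (hone : 1 ≤ x) : (k : R) ≤ x ^ k := by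
  calc (k : R) = ∑ i ∈ range k, 1 := by simp
    _ ≤ ∑ i ∈ range k, x ^ i := sum_le_sum fun i _ ↦ one_le_pow₀ hone
    _ = x ^ k := hx.symm

theorem eq_of_pos (hx : IsKbonacciRoot k x) (hy : IsKbonacciRoot k y) (hx_pos : 0 < x)
    (hy_pos : 0 < y) : x = y := by
  by_contra hne
  wlog hlt : y < x generalizing x y
  · exact this hy hx hy_pos hx_pos (Ne.symm hne) (lt_of_le_of_ne (not_lt.1 hlt) hne)
  -- Both `y ^ k * ∑ x ^ i` and `x ^ k * ∑ y ^ i` equal `x ^ k * y ^ k`.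
  have hterm : ∀ i ∈ range k, y ^ k * x ^ i < x ^ k * y ^ i := by
    intro i hi
    have hik : i < k := mem_range.1 hi
    have hpow : y ^ (k - i) < x ^ (k - i) := pow_lt_pow_left₀ hlt hy_pos.le (by omega)
    calc y ^ k * x ^ i = y ^ (k - i) * (x ^ i * y ^ i) := by
          rw [← pow_sub_mul_pow y hik.le]; ring
      _ < x ^ (k - i) * (x ^ i * y ^ i) := by gcongr
      _ = x ^ k * y ^ i := by rw [← pow_sub_mul_pow x hik.le]; ring
  have hsum : ∑ i ∈ range k, y ^ k * x ^ i < ∑ i ∈ range k, x ^ k * y ^ i :=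
    sum_lt_sum_of_nonempty (nonempty_range_iff.2 hx.ne_zero) hterm
  rw [← mul_sum, ← mul_sum, ← hx, ← hy, mul_comm] at hsum
  exact hsum.false

theorem binetCoeff_denom_pos (hx : IsKbonacciRoot k x) (hone : 1 < x) :
    0 < 2 + ((k : R) + 1) * (x - 2) := by
  have hk : (2 : R) ≤ k := by exact_mod_cast hx.two_le hone
  have hmul : x ^ k * (2 + ((k : R) + 1) * (x - 2)) = 2 * x ^ k - (k + 1) := by
    linear_combination -((k : R) + 1) * hx.pow_mul_two_sub
  have hmul_pos : 0 < x ^ k * (2 + ((k : R) + 1) * (x - 2)) := by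
    rw [hmul]
    linarith [hx.natCast_le_pow hone.le]
  exact pos_of_mul_pos_right hmul_pos (by positivity)

end LinearOrder

theorem one_div_lt_binetCoeff {K : Type*} [Field K] [LinearOrder K] [IsStrictOrderedRing K] {k : ℕ}
    {x : K} (hx : IsKbonacciRoot k x) (hone : 1 < x) : 1 / ((k : K) + 1) < binetCoeff k x := by
  have hk : (2 : K) ≤ k := by exact_mod_cast hx.two_le hone
  rw [binetCoeff, div_lt_div_iff₀ (by positivity) (hx.binetCoeff_denom_pos hone)]
  linarith

theorem one_div_lt_binetCoeff_mul_pow {K : Type*} [Field K] [LinearOrder K] [IsStrictOrderedRing K]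
    {k : ℕ} {x : K} (hx : IsKbonacciRoot k x) (hone : 1 < x) (n : ℕ) :
    1 / ((k : K) + 1) < binetCoeff k x * x ^ n := by
  have hlt : 1 / ((k : K) + 1) < binetCoeff k x := hx.one_div_lt_binetCoeff hone
  have hpos : 0 < binetCoeff k x := lt_trans (by positivity) hlt
  exact hlt.trans_le (le_mul_of_one_le_right hpos.le (one_le_pow₀ hone.le))

theorem irrational {α : ℝ} {k : ℕ} (hα : IsKbonacciRoot k α) (hone : 1 < α) : Irrational α := by
  rintro ⟨q, hq⟩
  obtain ⟨z, rfl⟩ := hα.isIntegral.exists_int_iff_exists_rat.1 ⟨q, hq.symm⟩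
  have hz_lt : z < 2 := by exact_mod_cast hα.lt_two (one_pos.trans hone)
  have hz_gt : 1 < z := by exact_mod_cast hone
  omega

section Complex

variable {k : ℕ} {β : ℂ}

theorem norm_pow_mul_norm_two_sub (hβ : IsKbonacciRoot k β) : ‖β‖ ^ k * ‖2 - β‖ = 1 := by
  rw [← norm_pow, ← norm_mul, hβ.pow_mul_two_sub, norm_one]

-- The two triangle inequalities `‖β ^ k‖ ≤ ∑ ‖β‖ ^ i` and `2 - ‖β‖ ≤ ‖2 - β‖` bound
-- `‖β‖ ^ k * (2 - ‖β‖)` by `1` from opposite sides, so both are equalities.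
theorem norm_pow_mul_two_sub_norm (hβ : IsKbonacciRoot k β) (hone : 1 < ‖β‖) :
    ‖β‖ ^ k * (2 - ‖β‖) = 1 := by
  apply le_antisymm
  · calc ‖β‖ ^ k * (2 - ‖β‖) ≤ ‖β‖ ^ k * ‖2 - β‖ := by
          gcongr
          simpa using norm_sub_norm_le 2 β
      _ = 1 := hβ.norm_pow_mul_norm_two_sub
  · have hsum : ‖β‖ ^ k ≤ ∑ i ∈ range k, ‖β‖ ^ i := by
      calc ‖β‖ ^ k = ‖∑ i ∈ range k, β ^ i‖ := by rw [← norm_pow, hβ]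
        _ ≤ ∑ i ∈ range k, ‖β ^ i‖ := norm_sum_le _ _
        _ = ∑ i ∈ range k, ‖β‖ ^ i := by simp only [norm_pow]
    have hmul : ‖β‖ ^ k * (‖β‖ - 1) ≤ ‖β‖ ^ k - 1 := by
      rw [← geom_sum_mul]
      gcongr
    linarith

theorem eq_norm_of_one_lt_norm (hβ : IsKbonacciRoot k β) (hone : 1 < ‖β‖) : β = ‖β‖ := by
  have hnorm : ‖β‖ ^ k * (2 - ‖β‖) = ‖β‖ ^ k * ‖2 - β‖ :=
    (hβ.norm_pow_mul_two_sub_norm hone).trans hβ.norm_pow_mul_norm_two_sub.symm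
  have hsub : 2 - ‖β‖ = ‖2 - β‖ := mul_left_cancel₀ (by positivity) hnorm
  have hray : SameRay ℝ 2 β := by
    rw [sameRay_iff_norm_sub, Complex.norm_ofNat, hsub, abs_norm]
  have hsmul := hray.norm_smul_eq
  simp only [Complex.norm_ofNat, Complex.real_smul] at hsmul
  push_cast at hsmul
  linear_combination hsmul / 2

theorem norm_le_one {α : ℝ} (hα : IsKbonacciRoot k α) (hpos : 0 < α) (hβ : IsKbonacciRoot k β)
    (hne : β ≠ α) : ‖β‖ ≤ 1 := by
  by_contra! hone
  have hβ_eq : β = ‖β‖ := hβ.eq_norm_of_one_lt_norm hone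
  have hnorm : IsKbonacciRoot k ‖β‖ :=
    of_map (φ := Complex.ofRealHom) Complex.ofReal_injective (by simpa [← hβ_eq] using hβ)
  exact hne (hβ_eq.trans (congrArg _ (hnorm.eq_of_pos hα (one_pos.trans hone) hpos)))

end Complex

end IsKbonacciRoot

theorem norm_le_norm_add_of_inner_nonneg {E : Type*} [NormedAddCommGroup E] [InnerProductSpace ℝ E]
    {x y : E} (h : 0 ≤ inner ℝ x y) : ‖x‖ ≤ ‖x + y‖ := by
  refine le_of_sq_le_sq ?_ (norm_nonneg _)
  rw [norm_add_sq_real]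
  nlinarith [sq_nonneg ‖y‖]

theorem mul_norm_sub_one_le_norm_binetCoeff_denom {k : ℕ} (hk : 1 ≤ k) {z : ℂ} (hz : z.re ≤ 1) :
    ((k : ℝ) + 1) * ‖z - 1‖ ≤ ‖2 + ((k : ℂ) + 1) * (z - 2)‖ := by
  have hk_real : (1 : ℝ) ≤ k := by exact_mod_cast hk
  have hinner : inner ℝ (((k + 1 : ℝ) : ℂ) * (1 - z)) ((k - 1 : ℝ) : ℂ) =
      (k - 1) * ((k + 1) * (1 - z.re)) := by
    rw [Complex.inner, Complex.re_ofReal_mul, Complex.conj_re, Complex.re_ofReal_mul,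
      Complex.sub_re, Complex.one_re]
  calc ((k : ℝ) + 1) * ‖z - 1‖ = ‖((k + 1 : ℝ) : ℂ) * (1 - z)‖ := by
        rw [norm_mul, Complex.norm_of_nonneg (by positivity), norm_sub_rev]
    _ ≤ ‖((k + 1 : ℝ) : ℂ) * (1 - z) + ((k - 1 : ℝ) : ℂ)‖ := by
        apply norm_le_norm_add_of_inner_nonneg
        rw [hinner]
        exact mul_nonneg (sub_nonneg.2 hk_real) (mul_nonneg (by positivity) (sub_nonneg.2 hz))
    _ = ‖2 + ((k : ℂ) + 1) * (z - 2)‖ := by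
        rw [← norm_neg]
        congr 1
        push_cast
        ring

theorem norm_binetCoeff_le {k : ℕ} (hk : 1 ≤ k) {z : ℂ} (hz : z.re ≤ 1) :
    ‖binetCoeff k z‖ ≤ 1 / ((k : ℝ) + 1) := by
  rw [binetCoeff, norm_div]
  refine div_le_of_le_mul₀ (norm_nonneg _) (by positivity) ?_
  rw [one_div, inv_mul_eq_div, le_div_iff₀ (by positivity), mul_comm]
  exact mul_norm_sub_one_le_norm_binetCoeff_denom hk hz

theorem norm_binetCoeff_mul_pow_le {k : ℕ} (hk : 1 ≤ k) {z : ℂ} (hz : ‖z‖ ≤ 1) (n : ℕ) :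
    ‖binetCoeff k z * z ^ n‖ ≤ 1 / ((k : ℝ) + 1) := by
  rw [norm_mul, norm_pow]
  exact (mul_le_of_le_one_right (norm_nonneg _) (pow_le_one₀ (norm_nonneg _) hz)).trans
    (norm_binetCoeff_le hk ((Complex.re_le_norm z).trans hz))

theorem exists_algHom_adjoin_simple_gen_ne {F L : Type*} [Field F] [Field L] [Algebra F L] {x : L}
    (hsep : IsSeparable F x) (hsplits : ((minpoly F x).map (algebraMap F L)).Splits)
    (hx : x ∉ (⊥ : Subalgebra F L)) : ∃ σ : F⟮x⟯ →ₐ[F] L, σ (AdjoinSimple.gen F x) ≠ x := by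
  obtain ⟨y, hne, hconj⟩ := (notMem_iff_exists_ne_and_isConjRoot hsep hsplits).1 hx
  have hy : y ∈ (minpoly F x).aroots L :=
    (isConjRoot_iff_mem_minpoly_aroots hsep.isIntegral).1 hconj
  refine ⟨(algHomAdjoinIntegralEquiv F hsep.isIntegral).symm ⟨y, hy⟩, ?_⟩
  rw [algHomAdjoinIntegralEquiv_symm_apply_gen]
  exact hne.symm

theorem exists_algHom_adjoin_simple_gen_ne_of_irrational {x : ℝ} (hx : Irrational x)
    (hint : IsIntegral ℚ (x : ℂ)) :
    ∃ σ : ℚ⟮(x : ℂ)⟯ →ₐ[ℚ] ℂ, σ (AdjoinSimple.gen ℚ (x : ℂ)) ≠ x := by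
  refine exists_algHom_adjoin_simple_gen_ne (minpoly.irreducible hint).separable
    (IsAlgClosed.splits _) ?_
  rintro ⟨q, hq⟩
  have hqx : (q : ℂ) = x := hq
  exact hx ⟨q, by exact_mod_cast hqx⟩

section Conjugation

variable {F L M : Type*} [Field F] [Field L] [Field M] [Algebra F L] [Algebra F M] {k : ℕ} {x : L}

theorem IsKbonacciRoot.algHom_gen (hx : IsKbonacciRoot k x) (σ : F⟮x⟯ →ₐ[F] M) :
    IsKbonacciRoot k (σ (AdjoinSimple.gen F x)) :=
  (hx.of_map (x := AdjoinSimple.gen F x) (algebraMap F⟮x⟯ L).injective).map σ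

theorem binetCoeff_algHom_gen_mul_pow {n : ℕ} {q : F}
    (h : binetCoeff k x * x ^ n = algebraMap F L q) (σ : F⟮x⟯ →ₐ[F] M) :
    binetCoeff k (σ (AdjoinSimple.gen F x)) * σ (AdjoinSimple.gen F x) ^ n = algebraMap F M q := by
  have hgen : binetCoeff k (AdjoinSimple.gen F x) * AdjoinSimple.gen F x ^ n =
      algebraMap F F⟮x⟯ q := by
    apply (algebraMap F⟮x⟯ L).injective
    rwa [map_mul, map_pow, map_binetCoeff, AdjoinSimple.algebraMap_gen,
      ← IsScalarTower.algebraMap_apply]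
  rw [← map_binetCoeff, ← map_pow, ← map_mul, hgen, σ.commutes]

end Conjugation

theorem Gamma1_ne_zero_general {k : ℕ} {α : ℝ} (hα : 1 < α) (hroot : IsKbonacciRoot k α) (n : ℕ) :
    Irrational (binetCoeff k α * α ^ n) := by
  rintro ⟨q, hq⟩
  have hrootℂ : IsKbonacciRoot k (α : ℂ) := hroot.map Complex.ofRealHom
  obtain ⟨σ, hσ⟩ := exists_algHom_adjoin_simple_gen_ne_of_irrational (hroot.irrational hα)
    hrootℂ.isIntegral.tower_top
  set β := σ (AdjoinSimple.gen ℚ (α : ℂ))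
  have hβ_norm : ‖β‖ ≤ 1 := hroot.norm_le_one (one_pos.trans hα) (hrootℂ.algHom_gen σ) hσ
  have hqα : binetCoeff k (α : ℂ) * (α : ℂ) ^ n = q := by
    have hqℂ := congrArg Complex.ofRealHom hq
    rw [map_mul, map_pow, map_binetCoeff, map_ratCast] at hqℂ
    exact hqℂ.symm
  have hqβ : binetCoeff k β * β ^ n = q := binetCoeff_algHom_gen_mul_pow hqα σ
  have hlt : (q : ℝ) < q := by
    calc (q : ℝ) ≤ ‖(q : ℂ)‖ := by simpa using le_abs_self (q : ℝ)
      _ = ‖binetCoeff k β * β ^ n‖ := by rw [hqβ]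
      _ ≤ 1 / ((k : ℝ) + 1) := norm_binetCoeff_mul_pow_le hroot.ne_zero.bot_lt hβ_norm n
      _ < q := hq ▸ hroot.one_div_lt_binetCoeff_mul_pow hα n
  exact hlt.false

/-- For k ≥ 2, n ≥ 2, ℓ, m ≥ 1 and a digit 1 ≤ d1 ≤ 9,
d1·10^{2ℓ+m} ≠ 9·f_k(α)·α^{n−1}, where α > 1 is the unique real root of
Ψ_k(x) = x^k − x^{k−1} − ⋯ − x − 1 and f_k(x) = (x−1)/(2+(k+1)(x−2)). -/
theorem Gamma1_ne_zero
    (k : ℕ) (hk : 2 ≤ k) (α : ℝ) (hα : 1 < α)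
    (hroot : α ^ k = ∑ i ∈ Finset.range k, α ^ i)
    (n : ℕ) (hn : 2 ≤ n) (ℓ m : ℕ) (hℓ : 1 ≤ ℓ) (hm : 1 ≤ m)
    (d1 : ℕ) (hd1pos : 1 ≤ d1) (hd1 : d1 ≤ 9) :
    (d1 : ℝ) * 10 ^ (2 * ℓ + m)
      ≠ 9 * ((α - 1) / (2 + ((k : ℝ) + 1) * (α - 2))) * α ^ (n - 1) := fun heq ↦
  Gamma1_ne_zero_general hα hroot (n - 1)
    ⟨d1 * 10 ^ (2 * ℓ + m) / 9, by push_cast; rw [binetCoeff]; linarith⟩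
end

section
/- For all integers k ≥ 2, n ≥ 2, ℓ ≥ 1, m ≥ 1 and digits d1, d2 ∈ {0,…,9} with d1 > 0 and d1 ≠ d2, one has d1·10^{2ℓ+m} − (d1 − d2)·10^{ℓ+m} ≠ 9·f_k(α)·α^{n−1}, where α is the unique real root greater than 1 of Ψ_k(x) = x^k − x^{k−1} − ⋯ − x − 1 and f_k(x) = (x − 1)/(2 + (k + 1)(x − 2)). -/
/-!
Every complex root `z` of `Ψ_k` satisfies `‖z‖ < 2`, and `α` is a unit in the ring of algebraic
integers, since `Ψ_k` is monic with constant coefficient `-1`. If `N = c · f_k(α) · α ^ e` with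
`b ∣ N` and `b` coprime to `c`, then clearing the denominator and cancelling `c` and `α ^ e` shows
that `b` divides `α - 1`. Each conjugate of the algebraic integer `(α - 1) / b` is then of norm less
than `(2 + 1) / 3 = 1` when `3 ≤ |b|`, so it vanishes and `α = 1`. For the theorem, `b = 10` and
`c = 9`.
-/

open Finset Polynomial
open scoped IntermediateField NumberField

/-- The characteristic polynomial `Ψ_k` of the `k`-generalized Fibonacci sequence. -/
noncomputable def kFibPoly (k : ℕ) : ℤ[X] := X ^ k - ∑ i ∈ range k, X ^ i

lemma monic_kFibPoly (k : ℕ) : (kFibPoly k).Monic := by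
  refine monic_X_pow_sub ((degree_sum_le _ _).trans_lt ?_)
  simp [Finset.sup_lt_iff]

section CommRing

variable {R : Type*} [CommRing R] {x : R} {k : ℕ}

lemma aeval_kFibPoly_eq_zero_iff :
    aeval x (kFibPoly k) = 0 ↔ x ^ k = ∑ i ∈ range k, x ^ i := by
  simp [kFibPoly, sub_eq_zero]

lemma isIntegral_of_pow_eq_geom_sum (hx : x ^ k = ∑ i ∈ range k, x ^ i) : IsIntegral ℤ x :=
  ⟨kFibPoly k, monic_kFibPoly k, aeval_kFibPoly_eq_zero_iff.mpr hx⟩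

lemma isUnit_of_pow_eq_geom_sum (hx : x ^ k = ∑ i ∈ range k, x ^ i) : IsUnit x := by
  cases k with
  | zero =>
    have : Subsingleton R := subsingleton_of_zero_eq_one (by simpa using hx.symm)
    exact isUnit_of_subsingleton x
  | succ j =>
    rw [sum_range_succ', pow_zero] at hx
    refine IsUnit.of_mul_eq_one (x ^ j - ∑ i ∈ range j, x ^ i) ?_
    rw [mul_sub, mul_sum, ← pow_succ', hx]
    simp [pow_succ']

lemma intCast_dvd_of_mul_eq_mul_isUnit {b c N : ℤ} (hbc : IsCoprime b c) (hbN : b ∣ N) {y v : R}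
    (hv : IsUnit v) (h : N * y = c * x * v) : (b : R) ∣ x := by
  have hcop : IsCoprime (b : R) c := by simpa using hbc.map (Int.castRingHom R)
  refine hcop.dvd_of_dvd_mul_left ?_
  rw [← hv.dvd_mul_right, ← h]
  exact (Int.cast_dvd_cast _ _ hbN).mul_right y

end CommRing

lemma norm_lt_two_of_pow_eq_geom_sum {𝕜 : Type*} [NormedDivisionRing 𝕜] {z : 𝕜} {k : ℕ}
    (hz : z ^ k = ∑ i ∈ range k, z ^ i) : ‖z‖ < 2 := by
  by_contra! h
  have hnonneg : 0 ≤ ∑ i ∈ range k, ‖z‖ ^ i := by positivity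
  refine lt_irrefl (‖z‖ ^ k) ?_
  calc
    ‖z‖ ^ k ≤ ∑ i ∈ range k, ‖z‖ ^ i := by simpa [← hz] using norm_sum_le (range k) (z ^ ·)
    _ ≤ (∑ i ∈ range k, ‖z‖ ^ i) * (‖z‖ - 1) := le_mul_of_one_le_right hnonneg (by linarith)
    _ = ‖z‖ ^ k - 1 := geom_sum_mul ‖z‖ k
    _ < ‖z‖ ^ k := sub_one_lt _

lemma eq_zero_of_forall_embedding_norm_lt_one {K : Type*} [Field K] [NumberField K] {x : K}
    (hx : IsIntegral ℤ x) (h : ∀ φ : K →+* ℂ, ‖φ x‖ < 1) : x = 0 := by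
  by_contra hx0
  refine (NumberField.one_le_house_of_isIntegral hx hx0).not_gt ?_
  exact (pi_norm_lt_iff one_pos).mpr h

section CharZero

variable {K : Type*} [Field K] [CharZero K]

lemma eq_zero_of_forall_complex_root_norm_lt_one {x : K} (hx : IsIntegral ℤ x) {P : ℤ[X]}
    (hP : aeval x P = 0) (h : ∀ z : ℂ, aeval z P = 0 → ‖z‖ < 1) : x = 0 := by
  have : FiniteDimensional ℚ ℚ⟮x⟯ := IntermediateField.adjoin.finiteDimensional hx.tower_top
  have : NumberField ℚ⟮x⟯ := ⟨⟩
  let y : ℚ⟮x⟯ := IntermediateField.AdjoinSimple.gen ℚ x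
  have hinj : Function.Injective (algebraMap ℚ⟮x⟯ K) := RingHom.injective _
  have hy : IsIntegral ℤ y := (isIntegral_algebraMap_iff hinj).mp hx
  have hPy : aeval y P = 0 := hinj (by rw [← aeval_algebraMap_apply, map_zero]; exact hP)
  have hy0 : y = 0 := eq_zero_of_forall_embedding_norm_lt_one hy fun φ ↦ h (φ y) <| by
    simpa [hPy] using aeval_algHom_apply φ.toIntAlgHom y P
  exact congrArg (algebraMap _ K) hy0

lemma eq_one_of_intCast_dvd_sub_one {a : 𝓞 K} {k : ℕ} (ha : a ^ k = ∑ i ∈ range k, a ^ i)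
    {b : ℤ} (hb : 3 ≤ |b|) (hdvd : (b : 𝓞 K) ∣ a - 1) : a = 1 := by
  obtain ⟨x, hx⟩ := hdvd
  have hax : a = 1 + b * x := sub_eq_iff_eq_add'.mp hx
  suffices (x : K) = 0 by simp [hax, NumberField.RingOfIntegers.coe_eq_zero_iff.mp this]
  refine eq_zero_of_forall_complex_root_norm_lt_one x.isIntegral_coe
    (P := (kFibPoly k).comp (1 + C b * X)) ?_ fun z hz ↦ ?_
  · rw [aeval_comp, aeval_kFibPoly_eq_zero_iff]
    simpa [hax] using congrArg (algebraMap (𝓞 K) K) ha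
  · have hlt : ‖1 + b * z‖ < 2 := norm_lt_two_of_pow_eq_geom_sum <|
      aeval_kFibPoly_eq_zero_iff.mp (by simpa [aeval_comp] using hz)
    have hle : ‖(b : ℂ)‖ * ‖z‖ ≤ ‖1 + b * z‖ + 1 := by
      simpa using norm_sub_le (1 + b * z) 1
    have hb' : 3 ≤ ‖(b : ℂ)‖ := by rw [Complex.norm_intCast]; exact_mod_cast hb
    nlinarith [norm_nonneg z]

theorem Gamma2_ne_zero_general {α : K} {k : ℕ} (hroot : α ^ k = ∑ i ∈ range k, α ^ i)
    (hα : α ≠ 1) {b c N : ℤ} (hb : 3 ≤ |b|) (hbc : IsCoprime b c) (hbN : b ∣ N) (hN : N ≠ 0)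
    (e : ℤ) : (N : K) ≠ c * ((α - 1) / (2 + ((k : K) + 1) * (α - 2))) * α ^ e := by
  intro heq
  have hden : 2 + ((k : K) + 1) * (α - 2) ≠ 0 := by
    intro h
    simp [h, hN] at heq
  obtain ⟨a, rfl⟩ : ∃ a : 𝓞 K, (a : K) = α := ⟨⟨α, isIntegral_of_pow_eq_geom_sum hroot⟩, rfl⟩
  have ha : a ^ k = ∑ i ∈ range k, a ^ i := by
    apply NumberField.RingOfIntegers.ext
    simpa using hroot
  obtain ⟨u, rfl⟩ := isUnit_of_pow_eq_geom_sum ha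
  have hcleared : (N : 𝓞 K) * (2 + (k + 1) * (u - 2)) = c * (u - 1) * (u ^ e : (𝓞 K)ˣ) := by
    apply NumberField.RingOfIntegers.ext
    simp only [map_mul, map_add, map_sub, map_one, map_intCast, map_natCast, map_ofNat,
      NumberField.Units.coe_zpow]
    rw [heq]
    field_simp
  have hdvd : (b : 𝓞 K) ∣ u - 1 :=
    intCast_dvd_of_mul_eq_mul_isUnit hbc hbN (u ^ e).isUnit hcleared
  exact hα (by simp [eq_one_of_intCast_dvd_sub_one ha hb hdvd])

end CharZero

lemma ten_dvd_mul_ten_pow_sub (d e : ℤ) {ℓ : ℕ} (hℓ : ℓ ≠ 0) (m : ℕ) :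
    10 ∣ d * 10 ^ (2 * ℓ + m) - e * 10 ^ (ℓ + m) :=
  dvd_sub (.mul_left (dvd_pow_self 10 (by lia)) _) (.mul_left (dvd_pow_self 10 (by lia)) _)

lemma mul_ten_pow_sub_pos {d₁ d₂ : ℤ} (hd₁ : 0 < d₁) (hd₂ : 0 ≤ d₂) {ℓ : ℕ} (hℓ : ℓ ≠ 0) (m : ℕ) :
    0 < d₁ * 10 ^ (2 * ℓ + m) - (d₁ - d₂) * 10 ^ (ℓ + m) := by
  have hpow : (10 : ℤ) ^ (ℓ + m) < 10 ^ (2 * ℓ + m) := pow_lt_pow_right₀ (by norm_num) (by lia)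
  have hpos : (0 : ℤ) < 10 ^ (ℓ + m) := by positivity
  nlinarith

/-- For k ≥ 2, n ≥ 2, ℓ, m ≥ 1 and digits d1, d2 ∈ {0,…,9} with d1 > 0, d1 ≠ d2,
d1·10^{2ℓ+m} − (d1 − d2)·10^{ℓ+m} ≠ 9·f_k(α)·α^{n−1}, where α > 1 is the unique
real root of Ψ_k and f_k(x) = (x−1)/(2+(k+1)(x−2)). -/
theorem Gamma2_ne_zero
    (k : ℕ) (hk : 2 ≤ k) (α : ℝ) (hα : 1 < α)
    (hroot : α ^ k = ∑ i ∈ Finset.range k, α ^ i)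
    (n : ℕ) (hn : 2 ≤ n) (ℓ m : ℕ) (hℓ : 1 ≤ ℓ) (hm : 1 ≤ m)
    (d1 d2 : ℕ) (hd1 : d1 ≤ 9) (hd2 : d2 ≤ 9) (hd1pos : 0 < d1) (hne : d1 ≠ d2) :
    (d1 : ℝ) * 10 ^ (2 * ℓ + m) - ((d1 : ℝ) - (d2 : ℝ)) * 10 ^ (ℓ + m)
      ≠ 9 * ((α - 1) / (2 + ((k : ℝ) + 1) * (α - 2))) * α ^ (n - 1) := by
  have hℓ0 : ℓ ≠ 0 := by lia
  exact_mod_cast Gamma2_ne_zero_general hroot hα.ne' (b := 10) (c := 9) (by norm_num) (by norm_num)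
    (ten_dvd_mul_ten_pow_sub d1 (d1 - d2) hℓ0 m)
    (mul_ten_pow_sub_pos (by exact_mod_cast hd1pos) (Int.natCast_nonneg d2) hℓ0 m).ne' (n - 1 : ℕ)
end
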